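/- Let (d,v,u) be an admissible triple for (λ,μ). Then B ∩ J·v·d^{−1} ⊆ A·d^{−1} (as sets of roots). -/

import Mathlib

/-!
Let `γ ∈ J` with `β = γ·v·d⁻¹ ∈ B`.  Since `J ⊆ A` and `v ∈ W_A` permutes each of the blocks
`{1, …, a}` and `{a+1, …, r}` (`Wpar_block`), we have `γ·v = e_q − e_p` with `p`, `q` in the same
block, and `p < q` because `v ∈ D_J`.  Hence `γ·v` is the sum of the `q − p` simple roots
`α_p, …, α_{q−1}`, all of which lie in `A`.  As `d⁻¹ ∈ D_A`, each of these is sent by `d⁻¹` to a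
positive root, which has height at least `1`, so `β` has height at least `q − p`
(`le_height_rAct`).  But `β` is simple, of height `1`; thus `q = p + 1` and `γ·v = α_p ∈ A`.
-/

/- The hyperoctahedral group `W_r` (the Weyl group of type `B_r`), realized as the group
of permutations `w` of `{±1, …, ±r}` satisfying `(−i)w = −(iw)`.  We realize its elements
inside `Equiv.Perm ℤ`, letting `w` act on `i` on the *right* via `i·w := w⁻¹ i` (so that
`i·(wd) = (i·w)·d` and products of group elements can be written in the same order as in
the paper). -/

namespace QQS

abbrev G : Type := Equiv.Perm ℤ

/-- The generators `s₀ = (1,−1)` and `sᵢ = (i,i+1)(−i,−i−1)`. -/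
def s (i : ℕ) : G :=
  if i = 0 then Equiv.swap 1 (-1)
  else Equiv.swap (i : ℤ) ((i : ℤ) + 1) * Equiv.swap (-(i : ℤ)) (-((i : ℤ) + 1))

/-- The generating set `{s₀, s₁, …, s_{r−1}}` of `W_r`. -/
def gens (r : ℕ) : Set G := {x | ∃ i, i < r ∧ x = s i}

/-- Membership in `W_r`: permutations of `{±1, …, ±r}` commuting with negation. -/
def inW (r : ℕ) (w : G) : Prop :=
  (∀ i : ℤ, w (-i) = -(w i)) ∧ ∀ i : ℤ, (r : ℤ) < |i| → w i = i

/-- The length `ℓ(w)` of `w ∈ W_r` with respect to the generators `s₀, …, s_{r−1}`. -/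
noncomputable def len (r : ℕ) (w : G) : ℕ :=
  sInf {n | ∃ l : List G, l.length = n ∧ (∀ x ∈ l, x ∈ gens r) ∧ l.prod = w}

/-- The partial sum of the first `k` parts of a composition. -/
def psum (l : List ℕ) (k : ℕ) : ℕ := (l.take k).sum

end QQS
namespace QQS

/- The root system of type `B_r`.  `W_r` acts on the vector space `V` with basis
`e₁, …, e_r`; we realize a vector `x = ∑ xᵢ eᵢ ∈ V` as the odd function `ℤ → ℚ` with
value `xᵢ` at `i` and `−xᵢ` at `−i`.  The (right) action of `w` on `V` determined by
`eᵢ·w = e_{i·w}` if `i·w > 0` and `eᵢ·w = −e_{−(i·w)}` if `i·w < 0` then becomes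
`x·w = x ∘ w`. -/

/-- The basis vector `eᵢ`, as an odd function `ℤ → ℚ`. -/
def evec (i : ℕ) : ℤ → ℚ := fun j => if j = (i : ℤ) then 1 else if j = -(i : ℤ) then -1 else 0

/-- The simple roots: `α₀ = e₁` and `αᵢ = e_{i+1} − eᵢ` for `i ≥ 1`. -/
def sroot : ℕ → (ℤ → ℚ)
  | 0 => evec 1
  | i + 1 => evec (i + 2) - evec (i + 1)

/-- `Δ₀ = {α₀, α₁, …, α_{r−1}}`. -/
def Delta0 (r : ℕ) : Set (ℤ → ℚ) := {x | ∃ i, i < r ∧ x = sroot i}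

/-- `Δ = Δ₀ ∖ {α₀}`. -/
def DeltaS (r : ℕ) : Set (ℤ → ℚ) := Delta0 r \ {sroot 0}

/-- The right action of `w ∈ W_r` on `V`: `x·w = x ∘ w`. -/
def rAct (w : G) (x : ℤ → ℚ) : ℤ → ℚ := fun j => x (w j)

/-- `x` is a positive root: `eᵢ`, `eᵢ + eⱼ` or `eⱼ − eᵢ` with `1 ≤ i < j ≤ r`. -/
def isPos (r : ℕ) (x : ℤ → ℚ) : Prop :=
  (∃ i, 1 ≤ i ∧ i ≤ r ∧ x = evec i) ∨
  (∃ i j, 1 ≤ i ∧ i < j ∧ j ≤ r ∧ (x = evec i + evec j ∨ x = evec j - evec i))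

/-- `D_K = {d ∈ W_r : α·d is a positive root for every α ∈ K}`. -/
def DD (r : ℕ) (K : Set (ℤ → ℚ)) : Set G :=
  {d | inW r d ∧ ∀ α ∈ K, isPos r (rAct d α)}

/-- `D_{K,L} = D_K ∩ D_L⁻¹`. -/
def DDd (r : ℕ) (K L : Set (ℤ → ℚ)) : Set G := {d | d ∈ DD r K ∧ d⁻¹ ∈ DD r L}

/-- For `M ⊆ Δ₀`, the parabolic subgroup `W_M`, generated by the reflections `s_α`
for `α ∈ M` (the reflection in the hyperplane orthogonal to `αᵢ` is `sᵢ`). -/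
def Wpar (r : ℕ) (M : Set (ℤ → ℚ)) : Subgroup G :=
  Subgroup.closure {w | ∃ i, i < r ∧ sroot i ∈ M ∧ w = s i}

/-- `D^M_{K,L} = D_K ∩ D_L⁻¹ ∩ W_M`. -/
def DDm (r : ℕ) (K L M : Set (ℤ → ℚ)) : Set G := {d | d ∈ DDd r K L ∧ d ∈ Wpar r M}

end QQS
namespace QQS

/- Fix an `a`-bicomposition `λ = (l1, l2)` and a `b`-bicomposition `μ = (m1, m2)` in
`Λ(n,r)`.  The sets of simple roots `J, I ⊆ Δ`, and `Ã, B̃, A, B ⊆ Δ₀`. -/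

/-- `j` is a partial sum of the composition `l`. -/
def isPartialSum (l : List ℕ) (j : ℕ) : Prop := ∃ k, psum l k = j

/-- `{α_{off+j} : 1 ≤ j ≤ l.sum − 1, j not a partial sum of l}`. -/
def compRoots (off : ℕ) (l : List ℕ) : Set (ℤ → ℚ) :=
  {x | ∃ j, 1 ≤ j ∧ j + 1 ≤ l.sum ∧ ¬ isPartialSum l j ∧ x = sroot (off + j)}

/-- `J = J₁ ∪ J₂ ⊆ Δ` associated to the bicomposition `(l1, l2)`. -/
def Jset (l1 l2 : List ℕ) : Set (ℤ → ℚ) := compRoots 0 l1 ∪ compRoots l1.sum l2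

/-- `Ã = Δ₀ ∖ {α_a}` if `a ≠ r`, and `Ã = Δ₀` if `a = r`. -/
def Atil (r a : ℕ) : Set (ℤ → ℚ) := if a = r then Delta0 r else Delta0 r \ {sroot a}

/-- `A = Ã ∖ {α₀}`. -/
def Aset (r a : ℕ) : Set (ℤ → ℚ) := Atil r a \ {sroot 0}

/-- An admissible triple `(d, v, u)` for `(λ, μ)`: `d ∈ D_{B̃,Ã}`,
`v ∈ D^A_{J, B·d ∩ A}` and `u ∈ D^B_{I, B ∩ J·v·d⁻¹}`. -/
def Admissible (r a b : ℕ) (l1 l2 m1 m2 : List ℕ) (d v u : G) : Prop :=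
  d ∈ DDd r (Atil r b) (Atil r a) ∧
  v ∈ DDm r (Jset l1 l2) ((rAct d '' Aset r b) ∩ Aset r a) (Aset r a) ∧
  u ∈ DDm r (Jset m1 m2) (Aset r b ∩ (rAct d⁻¹ '' (rAct v '' Jset l1 l2))) (Aset r b)

end QQS
namespace QQS

/-- The height of `x = ∑ xₖ eₖ`: the linear functional `∑ k xₖ`, which is `1` on every simple
root of type `B_r`. -/
def height (r : ℕ) (x : ℤ → ℚ) : ℚ := ∑ k ∈ Finset.Icc 1 r, (k : ℚ) * x k

lemma height_add (r : ℕ) (x y : ℤ → ℚ) : height r (x + y) = height r x + height r y := by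
  simp [height, mul_add, Finset.sum_add_distrib]

lemma height_sub (r : ℕ) (x y : ℤ → ℚ) : height r (x - y) = height r x - height r y := by
  simp [height, mul_sub, Finset.sum_sub_distrib]

lemma height_evec {r i : ℕ} (h1 : 1 ≤ i) (h2 : i ≤ r) : height r (evec i) = i := by
  unfold height evec
  rw [Finset.sum_eq_single i]
  · simp
  · intro k hk hki
    have hk1 := (Finset.mem_Icc.mp hk).1
    rw [if_neg (by omega), if_neg (by omega), mul_zero]
  · intro h
    exact absurd (Finset.mem_Icc.mpr ⟨h1, h2⟩) h

lemma one_le_height {r : ℕ} {x : ℤ → ℚ} (h : isPos r x) : 1 ≤ height r x := by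
  rcases h with ⟨i, h1, h2, rfl⟩ | ⟨i, j, h1, h2, h3, rfl | rfl⟩
  · rw [height_evec h1 h2]
    exact_mod_cast h1
  · rw [height_add, height_evec h1 (by omega), height_evec (by omega) h3]
    exact_mod_cast (by omega : 1 ≤ i + j)
  · rw [height_sub, height_evec h1 (by omega), height_evec (by omega) h3]
    have : (i : ℚ) + 1 ≤ j := by exact_mod_cast h2
    linarith

lemma sroot_of_pos {k : ℕ} (hk : 1 ≤ k) : sroot k = evec (k + 1) - evec k := by
  obtain ⟨k, rfl⟩ := Nat.exists_eq_add_of_le' hk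
  rfl

lemma height_sroot {r k : ℕ} (hk : k < r) : height r (sroot k) = 1 := by
  rcases Nat.eq_zero_or_pos k with rfl | h
  · simpa [sroot] using height_evec (i := 1) le_rfl hk
  · rw [sroot_of_pos h, height_sub, height_evec (by omega) hk, height_evec h hk.le]
    push_cast
    ring

lemma sroot_injective : Function.Injective sroot := by
  intro k m h
  -- `k + 1` is the only positive index at which `sroot k` takes the value `1`
  have h1 : sroot k ((k : ℤ) + 1) = 1 := by
    rcases Nat.eq_zero_or_pos k with rfl | hk
    · simp [sroot, evec]
    · rw [sroot_of_pos hk, Pi.sub_apply]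
      unfold evec
      rw [if_pos (by push_cast; ring), if_neg (by omega), if_neg (by omega), sub_zero]
  rw [h] at h1
  by_contra hne
  rcases Nat.eq_zero_or_pos m with rfl | hm
  · simp only [sroot, evec] at h1
    rw [if_neg (by omega), if_neg (by omega)] at h1
    norm_num at h1
  · rw [sroot_of_pos hm, Pi.sub_apply] at h1
    unfold evec at h1
    rw [if_neg (by omega), if_neg (by omega)] at h1
    split_ifs at h1
    · norm_num at h1
    · omega
    · norm_num at h1

lemma sroot_mem_Aset {r a k : ℕ} : sroot k ∈ Aset r a ↔ 1 ≤ k ∧ k < r ∧ k ≠ a := by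
  have hD : sroot k ∈ Delta0 r ↔ k < r :=
    ⟨fun ⟨i, hi, h⟩ => sroot_injective h ▸ hi, fun h => ⟨k, h, rfl⟩⟩
  unfold Aset Atil
  split_ifs with h
  · simp only [Set.mem_sdiff, Set.mem_singleton_iff, sroot_injective.eq_iff, hD]
    omega
  · simp only [Set.mem_sdiff, Set.mem_singleton_iff, sroot_injective.eq_iff, hD]
    omega

lemma Aset_subset_Atil (r a : ℕ) : Aset r a ⊆ Atil r a := Set.sdiff_subset

lemma Jset_subset {r a : ℕ} {l1 l2 : List ℕ} (hla : l1.sum = a) (hlr : l1.sum + l2.sum = r) :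
    Jset l1 l2 ⊆ Aset r a := by
  rintro x (⟨j, h1, h2, -, rfl⟩ | ⟨j, h1, h2, -, rfl⟩)
  · exact sroot_mem_Aset.mpr (by omega)
  · exact sroot_mem_Aset.mpr (by omega)

/-- Elements of `W_A` preserve the blocks `{1, …, a}` and `{a+1, …, r}`. -/
lemma Wpar_block {r a : ℕ} {w : G} (hw : w ∈ Wpar r (Aset r a)) :
    ∀ i : ℤ, ((1 ≤ w i ∧ w i ≤ a) ↔ (1 ≤ i ∧ i ≤ a)) ∧
      ((a < w i ∧ w i ≤ r) ↔ (a < i ∧ i ≤ r)) := by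
  unfold Wpar at hw
  induction hw using Subgroup.closure_induction with
  | mem x hx =>
    obtain ⟨k, -, hk, rfl⟩ := hx
    obtain ⟨h1, h2, h3⟩ := sroot_mem_Aset.mp hk
    intro i
    have h0 : k ≠ 0 := by omega
    simp only [s, h0, if_false, Equiv.Perm.mul_apply, Equiv.swap_apply_def]
    split_ifs <;> omega
  | one => intro i; simp
  | mul x y _ _ hx hy =>
    intro i
    rw [Equiv.Perm.mul_apply]
    exact ⟨(hx _).1.trans (hy i).1, (hx _).2.trans (hy i).2⟩
  | inv x _ hx =>
    intro i
    have := hx (x⁻¹ i)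
    rw [show x (x⁻¹ i) = i from x.apply_symm_apply i] at this
    exact ⟨this.1.symm, this.2.symm⟩

lemma rAct_evec {r : ℕ} {w : G} (hw : inW r w) {m p : ℕ} (h : w p = m) :
    rAct w (evec m) = evec p := by
  funext j
  have h1 : w j = m ↔ j = p := by rw [← h, w.injective.eq_iff]
  have h2 : w j = -(m : ℤ) ↔ j = -(p : ℤ) := by rw [← h, ← hw.1, w.injective.eq_iff]
  simp only [rAct, evec, h1, h2]

/-- If every root of `A` is sent to a positive root, then `e_q − e_p = α_p + ⋯ + α_{q−1}` with
`p ≤ q` in a common block is sent to a vector of height at least `q − p`. -/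
lemma le_height_rAct {r a p q : ℕ} {w : G} (hw : ∀ α ∈ Aset r a, isPos r (rAct w α))
    (hp : 1 ≤ p) (hpq : p ≤ q) (hq : q ≤ r) (hblock : q ≤ a ∨ a < p) :
    (q : ℚ) - p ≤ height r (rAct w (evec q - evec p)) := by
  induction q, hpq using Nat.le_induction with
  | base => simp [height, rAct]
  | succ k hk ih =>
    have ih := ih (by omega) (by omega)
    have h1 := one_le_height (hw _ ((sroot_mem_Aset (k := k)).mpr (by omega)))
    have hsum : rAct w (evec (k + 1) - evec p)
        = rAct w (sroot k) + rAct w (evec k - evec p) := by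
      rw [sroot_of_pos (by omega)]
      funext j
      simp [rAct]
    rw [hsum, height_add]
    push_cast
    linarith

/-- Let `(d,v,u)` be an admissible triple for `(λ,μ)`.  Then `B ∩ J·v·d⁻¹ ⊆ A·d⁻¹` (as sets of roots). -/
theorem B_inter_Jvd_subset (n r a b : ℕ) (l1 l2 m1 m2 : List ℕ)
    (hla : l1.sum = a) (hlr : l1.sum + l2.sum = r) (hln : l1.length + l2.length = n)
    (hmb : m1.sum = b) (hmr : m1.sum + m2.sum = r) (hmn : m1.length + m2.length = n)
    (d v u : G) (hadm : Admissible r a b l1 l2 m1 m2 d v u) :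
    Aset r b ∩ (rAct d⁻¹ '' (rAct v '' Jset l1 l2)) ⊆ rAct d⁻¹ '' Aset r a := by
  rintro β ⟨hβ, _, ⟨γ, hγ, rfl⟩, rfl⟩
  obtain ⟨⟨-, hd⟩, ⟨⟨⟨hvW, hvJ⟩, -⟩, hvA⟩, -⟩ := hadm
  have hvpos := hvJ γ hγ
  have hdA : ∀ α ∈ Aset r a, isPos r (rAct d⁻¹ α) :=
    fun α hα => hd.2 α (Aset_subset_Atil r a hα)
  have hγA := Jset_subset hla hlr hγ
  obtain ⟨m, -, rfl⟩ : γ ∈ Delta0 r := by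
    obtain ⟨j, h1, h2, -, rfl⟩ | ⟨j, h1, h2, -, rfl⟩ := hγ
    · exact ⟨_, by omega, rfl⟩
    · exact ⟨_, by omega, rfl⟩
  obtain ⟨hm1, hmlt, hma⟩ := sroot_mem_Aset.mp hγA
  have hblk := Wpar_block hvA
  have hP := hblk (v⁻¹ m)
  have hQ := hblk (v⁻¹ ((m + 1 : ℕ) : ℤ))
  rw [show v (v⁻¹ m) = m from v.apply_symm_apply _] at hP
  rw [show v (v⁻¹ ((m + 1 : ℕ) : ℤ)) = (m + 1 : ℕ) from v.apply_symm_apply _] at hQ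
  -- `p` and `q` are the images of `m` and `m + 1` under the right action of `v`
  obtain ⟨p, hp⟩ := Int.eq_ofNat_of_zero_le (a := v⁻¹ m) (by omega)
  obtain ⟨q, hq⟩ := Int.eq_ofNat_of_zero_le (a := v⁻¹ ((m + 1 : ℕ) : ℤ)) (by omega)
  rw [hp] at hP
  rw [hq] at hQ
  have hvγ : rAct v (sroot m) = evec q - evec p := by
    rw [sroot_of_pos hm1, ← rAct_evec hvW (Equiv.Perm.inv_eq_iff_eq.mp hp).symm,
      ← rAct_evec hvW (Equiv.Perm.inv_eq_iff_eq.mp hq).symm]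
    rfl
  rw [hvγ] at hβ hvpos ⊢
  have hpq : p < q := by
    have := one_le_height hvpos
    rw [height_sub, height_evec (by omega) (by omega), height_evec (by omega) (by omega)] at this
    have h : (p : ℚ) < q := by linarith
    exact_mod_cast h
  have hle := le_height_rAct hdA (p := p) (q := q) (by omega) hpq.le (by omega) (by omega)
  obtain ⟨k, hk, hβk⟩ : rAct d⁻¹ (evec q - evec p) ∈ Delta0 r := by
    have := Aset_subset_Atil r b hβ
    unfold Atil at this
    split_ifs at this
    · exact this
    · exact this.1
  rw [hβk, height_sroot hk] at hle
  have hqp : q = p + 1 := by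
    have h : (q : ℚ) ≤ p + 1 := by linarith
    have h' : q ≤ p + 1 := by exact_mod_cast h
    omega
  subst hqp
  rw [← sroot_of_pos (by omega)]
  exact ⟨_, sroot_mem_Aset.mpr (by omega), rfl⟩

end QQS
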